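/- arXiv:2510.17112 — 3 statements merged into one kernel-verified Lean document; each statement's English description precedes it below -/
import Mathlib

section
/- For every positive integer m, the Minkowski dimension of C_m equals 1/2; equivalently, lim_{δ→0⁺} log λ(V_δ(C_m)) / log δ = 1 − 1/2 = 1/2. -/
open MeasureTheory Filter Set

/-- The closed `δ`-neighbourhood `V_δ(Ω) = {x : ∃ y ∈ Ω, |x - y| ≤ δ}`. -/
def closedNbhd (Ω : Set ℝ) (δ : ℝ) : Set ℝ := {x : ℝ | ∃ y ∈ Ω, |x - y| ≤ δ}

/-- The value `g(a₁ ⋯ a_k) = 1/(a₁ + 1/(a₂ + ⋯ + 1/a_k))` of a finite continued fraction. -/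
noncomputable def cfVal : List ℕ → ℝ
  | [] => 0
  | a :: t => 1 / ((a : ℝ) + cfVal t)

/-- A word of positive integers whose last letter (if any) is at least `2`. -/
def isCFWord (a : List ℕ) : Prop := (∀ x ∈ a, 1 ≤ x) ∧ ∀ ℓ ∈ a.getLast?, 2 ≤ ℓ

/-- `C_m`: the set of rationals in `(0,1)` whose continued fraction expansion
has length `m`, i.e. the set of values of continued fractions of length `m`
with last partial quotient at least `2`. -/
def Cset (m : ℕ) : Set ℝ :=
  {x : ℝ | ∃ a : List ℕ, a.length = m ∧ isCFWord a ∧ x = cfVal a}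

/-!
*Upper bound.* The set `C_{m+1}` is contained in the union of the images of `C_m` under the
inverse branches `y ↦ 1/(a + y)` of the Gauss map. The branch `a` contracts by `a⁻²`, so it turns a
cover of `C_m` at scale `a²δ` into a cover of its image at scale `δ`. If `C_m` has covers with
`K δ⁻ˢ` points, the branches `a ≤ δ^(-1/2)` contribute at most `∑ₐ K (a²δ)⁻ˢ ≤ K ζ(2s) δ⁻ˢ` points;
this is where `s > 1/2` enters. All other branches land in `[0, √δ]`, which needs only `O(δ^(-1/2))`
points.

*Lower bound.* In `(0, √δ)` the numbers `1/a` are `δ`-dense, so `V_δ(C_1)` contains `(0, √δ)`.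
Passing from `C_m` to `C_{m+1}` through the branch `a = 1`, whose inverse is `4`-Lipschitz on
`[1/2, 1]`, loses at most a factor `4` in the measure of `V_δ(C_m) ∩ [0, 1]`.
-/

open Asymptotics
open scoped Topology

/-! ### Exponents of functions near zero -/

lemma isLittleO_rpow_rpow_nhdsGT_zero {b β : ℝ} (h : b < β) :
    (fun δ : ℝ => δ ^ β) =o[𝓝[>] 0] fun δ => δ ^ b := by
  have hpos : ∀ᶠ δ : ℝ in 𝓝[>] 0, 0 < δ := self_mem_nhdsWithin
  refine isLittleO_of_tendsto'
    (hpos.mono fun δ hδ h0 => absurd h0 (Real.rpow_pos_of_pos hδ b).ne') ?_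
  have hlim : Tendsto (fun δ : ℝ => δ ^ (β - b)) (𝓝[>] 0) (𝓝 0) := by
    simpa [Real.zero_rpow (sub_pos.2 h).ne'] using
      (Real.continuousAt_rpow_const 0 (β - b) (.inr (sub_pos.2 h).le)).tendsto.mono_left
        nhdsWithin_le_nhds
  exact hlim.congr' (hpos.mono fun δ hδ => Real.rpow_sub hδ β b)

lemma eventually_abs_lt_of_isLittleO {ι : Type*} {l : Filter ι} {f g : ι → ℝ} (h : f =o[l] g)
    (hg : ∀ᶠ x in l, g x ≠ 0) : ∀ᶠ x in l, |f x| < |g x| := by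
  filter_upwards [h.bound one_half_pos, hg] with x hfg hgx
  rw [Real.norm_eq_abs, Real.norm_eq_abs] at hfg
  linarith [abs_pos.2 hgx]

theorem tendsto_log_div_log_of_isBigO_rpow {f : ℝ → ℝ} {α : ℝ}
    (hupper : ∀ β < α, f =O[𝓝[>] 0] fun δ => δ ^ β)
    (hlower : ∀ β > α, (fun δ => δ ^ β) =O[𝓝[>] 0] f) :
    Tendsto (fun δ => Real.log (f δ) / Real.log δ) (𝓝[>] 0) (𝓝 α) := by
  have hunit : ∀ᶠ δ : ℝ in 𝓝[>] 0, δ ∈ Ioo 0 1 := Ioo_mem_nhdsGT one_pos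
  have hf : ∀ᶠ δ in 𝓝[>] 0, f δ ≠ 0 := by
    filter_upwards [(hlower (α + 1) (lt_add_one α)).eq_zero_imp, hunit] with δ hzero hδ h0
    exact (Real.rpow_pos_of_pos hδ.1 _).ne' (hzero h0)
  refine tendsto_order.2 ⟨fun b hb => ?_, fun b hb => ?_⟩
  · obtain ⟨β, hbβ, hβα⟩ := exists_between hb
    have hlt : ∀ᶠ δ in 𝓝[>] 0, |f δ| < |δ ^ b| := eventually_abs_lt_of_isLittleO
      ((hupper β hβα).trans_isLittleO (isLittleO_rpow_rpow_nhdsGT_zero hbβ))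
      (hunit.mono fun δ hδ => (Real.rpow_pos_of_pos hδ.1 b).ne')
    filter_upwards [hlt, hf, hunit] with δ hδ hfδ ⟨hδ0, hδ1⟩
    have hlog := Real.log_lt_log (abs_pos.2 hfδ) hδ
    rw [Real.log_abs, Real.log_abs, Real.log_rpow hδ0] at hlog
    rwa [lt_div_iff_of_neg (Real.log_neg hδ0 hδ1)]
  · obtain ⟨β, hαβ, hβb⟩ := exists_between hb
    have hlt : ∀ᶠ δ in 𝓝[>] 0, |δ ^ b| < |f δ| := eventually_abs_lt_of_isLittleO
      ((isLittleO_rpow_rpow_nhdsGT_zero hβb).trans_isBigO (hlower β hαβ)) hf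
    filter_upwards [hlt, hunit] with δ hδ ⟨hδ0, hδ1⟩
    have hlog := Real.log_lt_log (abs_pos.2 (Real.rpow_pos_of_pos hδ0 b).ne') hδ
    rw [Real.log_abs, Real.log_abs, Real.log_rpow hδ0] at hlog
    rwa [div_lt_iff_of_neg (Real.log_neg hδ0 hδ1)]

/-! ### Closed neighbourhoods and covers -/

lemma closedNbhd_mono {Ω Ω' : Set ℝ} (h : Ω ⊆ Ω') (δ : ℝ) : closedNbhd Ω δ ⊆ closedNbhd Ω' δ :=
  fun _ ⟨y, hy, hxy⟩ => ⟨y, h hy, hxy⟩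

lemma closedNbhd_closedNbhd_subset (Ω : Set ℝ) (δ ε : ℝ) :
    closedNbhd (closedNbhd Ω δ) ε ⊆ closedNbhd Ω (ε + δ) :=
  fun x ⟨y, ⟨z, hz, hyz⟩, hxy⟩ => ⟨z, hz, (abs_sub_le x y z).trans (add_le_add hxy hyz)⟩

lemma closedNbhd_eq_biUnion_closedBall (Ω : Set ℝ) (δ : ℝ) :
    closedNbhd Ω δ = ⋃ y ∈ Ω, Metric.closedBall y δ := by
  ext x
  simp [closedNbhd, Real.dist_eq]

lemma volume_closedNbhd_lt_top {Ω : Set ℝ} (hΩ : Bornology.IsBounded Ω) (δ : ℝ) :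
    volume (closedNbhd Ω δ) < ⊤ := by
  refine (measure_mono ?_).trans_lt (hΩ.cthickening (δ := δ)).measure_lt_top
  exact fun x ⟨y, hy, hxy⟩ => Metric.mem_cthickening_of_dist_le x y δ Ω hy hxy

lemma volume_closedNbhd_finset_le (F : Finset ℝ) (δ : ℝ) :
    volume (closedNbhd F δ) ≤ ENNReal.ofReal (F.card * (2 * δ)) :=
  calc volume (closedNbhd F δ)
      = volume (⋃ y ∈ F, Metric.closedBall y δ) := by
        rw [closedNbhd_eq_biUnion_closedBall]; rfl
    _ ≤ ∑ y ∈ F, volume (Metric.closedBall y δ) := measure_biUnion_finset_le _ _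
    _ = ENNReal.ofReal (F.card * (2 * δ)) := by
        simp [Real.volume_closedBall, ENNReal.ofReal_mul]

lemma exists_finset_Icc_subset_closedNbhd {L δ : ℝ} (hL : 0 ≤ L) (hδ : 0 < δ) :
    ∃ F : Finset ℝ, Icc 0 L ⊆ closedNbhd F δ ∧ (F.card : ℝ) ≤ L / δ + 1 := by
  refine ⟨(Finset.range (⌊L / δ⌋₊ + 1)).image fun k : ℕ => k * δ, fun x ⟨hx0, hxL⟩ => ?_, ?_⟩
  · refine ⟨⌊x / δ⌋₊ * δ, Finset.mem_coe.2 (Finset.mem_image_of_mem _ ?_), ?_⟩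
    · exact Finset.mem_range_succ_iff.2 (Nat.floor_le_floor (by gcongr))
    · have hle := (le_div_iff₀ hδ).1 (Nat.floor_le (div_nonneg hx0 hδ.le))
      have hlt := (div_lt_iff₀ hδ).1 (Nat.lt_floor_add_one (x / δ))
      exact abs_le.2 ⟨by linarith, by linarith⟩
  · calc _ ≤ ((Finset.range (⌊L / δ⌋₊ + 1)).card : ℝ) := Nat.cast_le.2 Finset.card_image_le
      _ = ((⌊L / δ⌋₊ + 1 : ℕ) : ℝ) := by rw [Finset.card_range]
      _ ≤ L / δ + 1 := by
        push_cast
        gcongr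
        exact Nat.floor_le (by positivity)

/-- `Ω` is covered by at most `K δ⁻ˢ` closed intervals of radius `δ`, for a constant `K`, so its
upper Minkowski dimension is at most `s`. The bound is asked for on all of `(0, 1]` rather than near
`0`, since the constant has to serve the scales `a²δ` with `a` as large as `δ ^ (-1/2)`. -/
def HasCoverExponent (s : ℝ) (Ω : Set ℝ) : Prop :=
  ∃ K : ℝ, ∀ δ ∈ Ioc (0 : ℝ) 1,
    ∃ F : Finset ℝ, Ω ⊆ closedNbhd F δ ∧ (F.card : ℝ) ≤ K * δ ^ (-s)

namespace HasCoverExponent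

variable {s : ℝ} {Ω Ω' : Set ℝ}

lemma mono (h : HasCoverExponent s Ω') (hsub : Ω ⊆ Ω') : HasCoverExponent s Ω := by
  obtain ⟨K, hK⟩ := h
  refine ⟨K, fun δ hδ => ?_⟩
  obtain ⟨F, hF, hcard⟩ := hK δ hδ
  exact ⟨F, hsub.trans hF, hcard⟩

lemma singleton (hs : 0 ≤ s) (x : ℝ) : HasCoverExponent s {x} := by
  refine ⟨1, fun δ hδ => ⟨{x}, ?_, ?_⟩⟩
  · exact singleton_subset_iff.2 ⟨x, by simp, by simpa using hδ.1.le⟩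
  · simpa using Real.one_le_rpow_of_pos_of_le_one_of_nonpos hδ.1 hδ.2 (neg_nonpos.2 hs)

lemma volume_closedNbhd_isBigO (h : HasCoverExponent s Ω) :
    (fun δ => (volume (closedNbhd Ω δ)).toReal) =O[𝓝[>] 0] fun δ => δ ^ (1 - s) := by
  obtain ⟨K, hK⟩ := h
  refine IsBigO.of_bound (4 * K) ?_
  filter_upwards [Ioc_mem_nhdsGT one_pos] with δ hδ
  obtain ⟨F, hF, hcard⟩ := hK δ hδ
  have hδ0 : 0 < δ := hδ.1
  have hsub : closedNbhd Ω δ ⊆ closedNbhd F (δ + δ) :=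
    (closedNbhd_mono hF δ).trans (closedNbhd_closedNbhd_subset F δ δ)
  have hvol : (volume (closedNbhd Ω δ)).toReal ≤ F.card * (2 * (δ + δ)) :=
    ENNReal.toReal_le_of_le_ofReal (by positivity)
      ((measure_mono hsub).trans (volume_closedNbhd_finset_le F (δ + δ)))
  rw [Real.norm_of_nonneg ENNReal.toReal_nonneg, Real.norm_of_nonneg (by positivity)]
  calc (volume (closedNbhd Ω δ)).toReal
      ≤ F.card * (2 * (δ + δ)) := hvol
    _ ≤ K * δ ^ (-s) * (2 * (δ + δ)) := by gcongr
    _ = 4 * K * δ ^ (1 - s) := by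
        rw [sub_eq_neg_add, Real.rpow_add_one hδ0.ne']; ring

end HasCoverExponent

/-! ### Inverse branches of the Gauss map -/

/-- The inverse branch `x ↦ 1 / (a + x)` of the Gauss map `x ↦ 1 / x mod 1`, which prepends the
partial quotient `a` to a continued fraction. -/
noncomputable def gaussBranch (a x : ℝ) : ℝ := 1 / (a + x)

/-- The preimage in `(0, 1]` of a set `Ω ⊆ [0, 1)` under the Gauss map, as the union of the images
of `Ω` under all inverse branches. -/
def gaussPreimage (Ω : Set ℝ) : Set ℝ := ⋃ (a : ℕ) (_ : 1 ≤ a), gaussBranch a '' Ω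

lemma gaussBranch_mem_Icc {a x : ℝ} (ha : 1 ≤ a) (hx : 0 ≤ x) : gaussBranch a x ∈ Icc 0 1 :=
  ⟨by unfold gaussBranch; positivity, div_le_one_of_le₀ (by linarith) (by linarith)⟩

lemma abs_gaussBranch_sub_le {a x y : ℝ} (ha : 0 < a) (hx : 0 ≤ x) (hy : 0 ≤ y) :
    |gaussBranch a x - gaussBranch a y| ≤ |x - y| / a ^ 2 := by
  have hax : 0 < a + x := by linarith
  have hay : 0 < a + y := by linarith
  calc |gaussBranch a x - gaussBranch a y|
      = |(y - x) / ((a + x) * (a + y))| := by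
        unfold gaussBranch; congr 1; field_simp; ring
    _ = |x - y| / ((a + x) * (a + y)) := by
        rw [abs_div, abs_sub_comm y x, abs_of_pos (mul_pos hax hay)]
    _ ≤ |x - y| / a ^ 2 := by
        rw [pow_two]; gcongr <;> linarith

lemma exists_finset_image_gaussBranch_subset {Ω : Set ℝ} (hΩ : Ω ⊆ Ici 0) {a δ : ℝ} (ha : 0 < a)
    {F : Finset ℝ} (hF : Ω ⊆ closedNbhd F (a ^ 2 * δ)) :
    ∃ G : Finset ℝ, gaussBranch a '' Ω ⊆ closedNbhd G δ ∧ G.card ≤ F.card := by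
  -- The centres may be negative; replacing `f` by `|f|` only brings it closer to `Ω`.
  refine ⟨F.image fun f => gaussBranch a |f|, ?_, Finset.card_image_le⟩
  rintro _ ⟨y, hy, rfl⟩
  obtain ⟨f, hf, hyf⟩ := hF hy
  refine ⟨gaussBranch a |f|, Finset.mem_coe.2 (Finset.mem_image_of_mem _ hf), ?_⟩
  have hy0 : 0 ≤ y := hΩ hy
  have hdist : |y - (|f|)| ≤ a ^ 2 * δ := by
    simpa only [abs_of_nonneg hy0] using (abs_abs_sub_abs_le y f).trans hyf
  calc |gaussBranch a y - gaussBranch a (|f|)|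
      ≤ |y - (|f|)| / a ^ 2 := abs_gaussBranch_sub_le ha hy0 (abs_nonneg f)
    _ ≤ δ := by rwa [div_le_iff₀' (by positivity)]

lemma gaussPreimage_subset_union {Ω : Set ℝ} (hΩ : Ω ⊆ Ici 0) {r : ℝ} (hr : 0 < r) :
    gaussPreimage Ω ⊆ (⋃ a ∈ Finset.Icc 1 ⌊1 / r⌋₊, gaussBranch a '' Ω) ∪ Icc 0 r := by
  simp only [gaussPreimage, iUnion_subset_iff]
  rintro a ha _ ⟨y, hy, rfl⟩
  have hy0 : 0 ≤ y := hΩ hy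
  by_cases har : a ≤ ⌊1 / r⌋₊
  · exact .inl (mem_biUnion (Finset.mem_coe.2 (Finset.mem_Icc.2 ⟨ha, har⟩)) (mem_image_of_mem _ hy))
  · have hra : 1 / r < a := (Nat.floor_lt (by positivity)).1 (not_le.1 har)
    refine .inr ⟨(gaussBranch_mem_Icc (by exact_mod_cast ha) hy0).1, ?_⟩
    exact (one_div_le hr (by positivity)).1 (by linarith)

lemma sum_mul_rpow_neg_le_tsum {s δ : ℝ} (hs : 1 / 2 < s) (hδ : 0 ≤ δ) (A : Finset ℕ) :
    ∑ a ∈ A, ((a : ℝ) ^ 2 * δ) ^ (-s) ≤ (∑' a : ℕ, (a : ℝ) ^ (-(2 * s))) * δ ^ (-s) := by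
  have hsummable : Summable fun a : ℕ => (a : ℝ) ^ (-(2 * s)) :=
    Real.summable_nat_rpow.2 (by linarith)
  have hterm (a : ℕ) : ((a : ℝ) ^ 2 * δ) ^ (-s) = (a : ℝ) ^ (-(2 * s)) * δ ^ (-s) := by
    rw [Real.mul_rpow (by positivity) hδ, ← Real.rpow_natCast_mul (by positivity)]
    congr 2
    push_cast
    ring
  simp only [hterm, ← Finset.sum_mul]
  gcongr
  exact hsummable.sum_le_tsum A fun a _ => by positivity

lemma exists_finset_biUnion_image_gaussBranch_subset {s K δ : ℝ} {Ω : Set ℝ} (hΩ : Ω ⊆ Ici 0)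
    (hs : 1 / 2 < s) (hδ : 0 < δ)
    (hK : ∀ ε ∈ Ioc (0 : ℝ) 1, ∃ F : Finset ℝ, Ω ⊆ closedNbhd F ε ∧ (F.card : ℝ) ≤ K * ε ^ (-s)) :
    ∃ G : Finset ℝ, (⋃ a ∈ Finset.Icc 1 ⌊1 / √δ⌋₊, gaussBranch a '' Ω) ⊆ closedNbhd G δ ∧
      (G.card : ℝ) ≤ K * (∑' a : ℕ, (a : ℝ) ^ (-(2 * s))) * δ ^ (-s) := by
  set A := Finset.Icc 1 ⌊1 / √δ⌋₊
  have hK0 : 0 ≤ K := by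
    obtain ⟨F, -, hcard⟩ := hK 1 (by simp)
    simpa using F.card.cast_nonneg.trans hcard
  have hbranch : ∀ a ∈ A, ∃ G : Finset ℝ, gaussBranch a '' Ω ⊆ closedNbhd G δ ∧
      (G.card : ℝ) ≤ K * ((a : ℝ) ^ 2 * δ) ^ (-s) := by
    intro a ha
    obtain ⟨ha1, haA⟩ := Finset.mem_Icc.1 ha
    have ha0 : (0 : ℝ) < a := by exact_mod_cast ha1
    have hscale : (a : ℝ) ^ 2 * δ ≤ 1 := by
      have har : a * √δ ≤ 1 :=
        (le_div_iff₀ (by positivity)).1 ((Nat.le_floor_iff (by positivity)).1 haA)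
      rw [← Real.sq_sqrt hδ.le, ← mul_pow]
      exact pow_le_one₀ (by positivity) har
    obtain ⟨F, hF, hFcard⟩ := hK _ ⟨by positivity, hscale⟩
    obtain ⟨G, hG, hGF⟩ := exists_finset_image_gaussBranch_subset hΩ ha0 hF
    exact ⟨G, hG, (Nat.cast_le.2 hGF).trans hFcard⟩
  choose! G hG hGcard using hbranch
  refine ⟨A.biUnion G, iUnion₂_subset fun a ha => (hG a ha).trans (closedNbhd_mono ?_ δ), ?_⟩
  · exact Finset.coe_subset.2 (Finset.subset_biUnion_of_mem G ha)
  · calc ((A.biUnion G).card : ℝ)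
        ≤ ∑ a ∈ A, ((G a).card : ℝ) := by exact_mod_cast Finset.card_biUnion_le
      _ ≤ ∑ a ∈ A, K * ((a : ℝ) ^ 2 * δ) ^ (-s) := Finset.sum_le_sum hGcard
      _ = K * ∑ a ∈ A, ((a : ℝ) ^ 2 * δ) ^ (-s) := (Finset.mul_sum _ _ _).symm
      _ ≤ K * ((∑' a : ℕ, (a : ℝ) ^ (-(2 * s))) * δ ^ (-s)) := by
          gcongr; exact sum_mul_rpow_neg_le_tsum hs hδ.le A
      _ = K * (∑' a : ℕ, (a : ℝ) ^ (-(2 * s))) * δ ^ (-s) := (mul_assoc _ _ _).symm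

lemma sqrt_div_self_add_one_le {s δ : ℝ} (hs : 1 / 2 ≤ s) (hδ : δ ∈ Ioc (0 : ℝ) 1) :
    √δ / δ + 1 ≤ 2 * δ ^ (-s) := by
  have hsqrt : √δ / δ = δ ^ (-(1 / 2) : ℝ) := by
    rw [Real.sqrt_div_self, Real.sqrt_eq_rpow, ← Real.rpow_neg hδ.1.le]
  have hle : δ ^ (-(1 / 2) : ℝ) ≤ δ ^ (-s) :=
    Real.rpow_le_rpow_of_exponent_ge hδ.1 hδ.2 (neg_le_neg hs)
  have hone : 1 ≤ δ ^ (-s) :=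
    Real.one_le_rpow_of_pos_of_le_one_of_nonpos hδ.1 hδ.2 (by linarith)
  linarith

theorem HasCoverExponent.gaussPreimage {s : ℝ} {Ω : Set ℝ} (h : HasCoverExponent s Ω)
    (hΩ : Ω ⊆ Ici 0) (hs : 1 / 2 < s) : HasCoverExponent s (gaussPreimage Ω) := by
  obtain ⟨K, hK⟩ := h
  refine ⟨K * (∑' a : ℕ, (a : ℝ) ^ (-(2 * s))) + 2, fun δ hδ => ?_⟩
  obtain ⟨G, hG, hGcard⟩ := exists_finset_biUnion_image_gaussBranch_subset hΩ hs hδ.1 hK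
  obtain ⟨I, hI, hIcard⟩ := exists_finset_Icc_subset_closedNbhd (Real.sqrt_nonneg δ) hδ.1
  refine ⟨G ∪ I, (gaussPreimage_subset_union hΩ (Real.sqrt_pos.2 hδ.1)).trans (union_subset
    (hG.trans (closedNbhd_mono (by simp) δ)) (hI.trans (closedNbhd_mono (by simp) δ))), ?_⟩
  calc ((G ∪ I).card : ℝ)
      ≤ G.card + I.card := by exact_mod_cast Finset.card_union_le G I
    _ ≤ K * (∑' a : ℕ, (a : ℝ) ^ (-(2 * s))) * δ ^ (-s) + 2 * δ ^ (-s) :=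
        add_le_add hGcard (hIcard.trans (sqrt_div_self_add_one_le hs.le hδ))
    _ = _ := by ring

lemma lipschitzOnWith_one_div_sub_one :
    LipschitzOnWith 4 (fun x : ℝ => 1 / x - 1) (Ici (1 / 2)) := by
  refine LipschitzOnWith.of_dist_le_mul fun x (hx : 1 / 2 ≤ x) y (hy : 1 / 2 ≤ y) => ?_
  have hx0 : 0 < x := by linarith
  have hy0 : 0 < y := by linarith
  have hxy : 1 / 4 ≤ x * y := by nlinarith
  calc dist (1 / x - 1) (1 / y - 1)
      = |(y - x) / (x * y)| := by rw [Real.dist_eq]; congr 1; field_simp; ring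
    _ = dist x y / (x * y) := by
        rw [abs_div, abs_sub_comm, abs_of_pos (mul_pos hx0 hy0), Real.dist_eq]
    _ ≤ dist x y / (1 / 4) := by gcongr
    _ = ((4 : NNReal) : ℝ) * dist x y := by push_cast; ring

lemma volume_closedNbhd_inter_Icc_le_four_mul {Ω : Set ℝ} (hΩ : Ω ⊆ Ici 0) (δ : ℝ) :
    volume (closedNbhd Ω δ ∩ Icc 0 1) ≤
      4 * volume (closedNbhd (gaussBranch 1 '' Ω) δ ∩ Icc 0 1) := by
  set S := closedNbhd (gaussBranch 1 '' Ω) δ ∩ Icc (1 / 2) 1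
  have hsub : closedNbhd Ω δ ∩ Icc 0 1 ⊆ (fun x => 1 / x - 1) '' S := by
    rintro x ⟨⟨y, hy, hxy⟩, hx0, hx1⟩
    have hcontract := abs_gaussBranch_sub_le one_pos hx0 (hΩ hy)
    rw [one_pow, div_one] at hcontract
    refine ⟨gaussBranch 1 x, ⟨⟨_, mem_image_of_mem _ hy, hcontract.trans hxy⟩, ?_, ?_⟩, ?_⟩
    · exact one_div_le_one_div_of_le (by linarith) (by linarith)
    · exact (gaussBranch_mem_Icc le_rfl hx0).2
    · simp [gaussBranch]
  have hlip := (lipschitzOnWith_one_div_sub_one.mono (s := S) fun x hx => hx.2.1)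
    |>.hausdorffMeasure_image_le zero_le_one
  rw [hausdorffMeasure_real, ENNReal.rpow_one] at hlip
  calc volume (closedNbhd Ω δ ∩ Icc 0 1)
      ≤ volume ((fun x => 1 / x - 1) '' S) := measure_mono hsub
    _ ≤ 4 * volume S := by exact_mod_cast hlip
    _ ≤ 4 * volume (closedNbhd (gaussBranch 1 '' Ω) δ ∩ Icc 0 1) := by
        gcongr; exact inter_subset_inter_right _ (Icc_subset_Icc_left (by norm_num))

/-! ### The sets `C_m` -/

lemma isCFWord_cons_iff (a : ℕ) (t : List ℕ) :
    isCFWord (a :: t) ↔ 1 ≤ a ∧ (t = [] → 2 ≤ a) ∧ isCFWord t := by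
  cases t with
  | nil => simp [isCFWord]
  | cons b t => simp [isCFWord, List.getLast?_cons_cons, and_assoc]

lemma Cset_zero : Cset 0 = {0} := by
  ext x
  simp [Cset, isCFWord, cfVal]

lemma Cset_succ_subset_gaussPreimage (m : ℕ) : Cset (m + 1) ⊆ gaussPreimage (Cset m) := by
  rintro _ ⟨w, hlen, hw, rfl⟩
  obtain ⟨a, t, rfl⟩ := List.exists_cons_of_length_eq_add_one hlen
  obtain ⟨ha, -, ht⟩ := (isCFWord_cons_iff a t).1 hw
  exact mem_iUnion₂.2 ⟨a, ha, cfVal t, ⟨t, by simpa using hlen, ht, rfl⟩, rfl⟩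

lemma image_gaussBranch_Cset_subset {m a : ℕ} (hm : m ≠ 0) (ha : 1 ≤ a) :
    gaussBranch a '' Cset m ⊆ Cset (m + 1) := by
  rintro _ ⟨_, ⟨t, hlen, ht, rfl⟩, rfl⟩
  refine ⟨a :: t, by simp [hlen], (isCFWord_cons_iff a t).2 ⟨ha, fun hnil => ?_, ht⟩, rfl⟩
  exact absurd (by simpa [hnil] using hlen.symm) hm

lemma one_div_natCast_mem_Cset_one {a : ℕ} (ha : 2 ≤ a) : 1 / (a : ℝ) ∈ Cset 1 :=
  ⟨[a], rfl, by simp [isCFWord, ha, one_le_two.trans ha], by simp [cfVal]⟩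

lemma Cset_subset_Icc (m : ℕ) : Cset m ⊆ Icc 0 1 := by
  induction m with
  | zero => simp [Cset_zero]
  | succ m ih =>
    refine (Cset_succ_subset_gaussPreimage m).trans (iUnion₂_subset fun a ha => ?_)
    rintro _ ⟨y, hy, rfl⟩
    exact gaussBranch_mem_Icc (by exact_mod_cast ha) (ih hy).1

lemma Cset_subset_Ici (m : ℕ) : Cset m ⊆ Ici 0 := (Cset_subset_Icc m).trans Icc_subset_Ici_self

theorem hasCoverExponent_Cset {s : ℝ} (hs : 1 / 2 < s) (m : ℕ) : HasCoverExponent s (Cset m) := by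
  induction m with
  | zero => exact Cset_zero ▸ .singleton (by linarith) 0
  | succ m ih =>
    exact (ih.gaussPreimage (Cset_subset_Ici m) hs).mono (Cset_succ_subset_gaussPreimage m)

lemma Ioo_sqrt_subset_closedNbhd_Cset_one {δ : ℝ} (hδ : δ ≤ 1) :
    Ioo 0 √δ ⊆ closedNbhd (Cset 1) δ := by
  rintro x ⟨hx0, hxδ⟩
  have hδ0 : 0 < δ := Real.sqrt_pos.1 (hx0.trans hxδ)
  have hxx : x ^ 2 ≤ δ := (Real.le_sqrt' hx0).1 hxδ.le
  have hx1 : 1 ≤ 1 / x := by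
    rw [le_div_iff₀ hx0, one_mul]
    exact hxδ.le.trans (Real.sqrt_le_one.2 hδ)
  set n := ⌊1 / x⌋₊
  have hn : 1 ≤ n := Nat.le_floor (by exact_mod_cast hx1)
  have hnx : n * x ≤ 1 := (le_div_iff₀ hx0).1 (Nat.floor_le (by positivity))
  have hxn : 1 < (n + 1) * x := (div_lt_iff₀ hx0).1 (Nat.lt_floor_add_one _)
  -- Since `n ≤ 1/x < n + 1`, the point `1/(n + 1)` lies in `[x - x², x]`.
  have hbelow : 1 / ((n + 1 : ℕ) : ℝ) ≤ x := by
    rw [div_le_iff₀ (by positivity)]; push_cast; linarith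
  have habove : x - x ^ 2 ≤ 1 / ((n + 1 : ℕ) : ℝ) := by
    rw [le_div_iff₀ (by positivity)]; push_cast; nlinarith
  exact ⟨_, one_div_natCast_mem_Cset_one (Nat.succ_le_succ hn), abs_le.2 ⟨by linarith, by linarith⟩⟩

lemma ofReal_sqrt_le_volume_closedNbhd_Cset (n : ℕ) {δ : ℝ} (hδ : δ ≤ 1) :
    ENNReal.ofReal √δ ≤ 4 ^ n * volume (closedNbhd (Cset (n + 1)) δ ∩ Icc 0 1) := by
  induction n with
  | zero =>
    have hsub : Ioo 0 √δ ⊆ Icc 0 1 :=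
      Ioo_subset_Icc_self.trans (Icc_subset_Icc_right (Real.sqrt_le_one.2 hδ))
    simpa using measure_mono (μ := volume)
      (subset_inter (Ioo_sqrt_subset_closedNbhd_Cset_one hδ) hsub)
  | succ n ih =>
    have himage : gaussBranch 1 '' Cset (n + 1) ⊆ Cset (n + 2) := by
      simpa using image_gaussBranch_Cset_subset n.succ_ne_zero le_rfl
    calc ENNReal.ofReal √δ
        ≤ 4 ^ n * volume (closedNbhd (Cset (n + 1)) δ ∩ Icc 0 1) := ih
      _ ≤ 4 ^ n * (4 * volume (closedNbhd (gaussBranch 1 '' Cset (n + 1)) δ ∩ Icc 0 1)) := by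
          gcongr; exact volume_closedNbhd_inter_Icc_le_four_mul (Cset_subset_Ici _) δ
      _ ≤ 4 ^ n * (4 * volume (closedNbhd (Cset (n + 2)) δ ∩ Icc 0 1)) := by
          gcongr; exact closedNbhd_mono himage δ
      _ = 4 ^ (n + 1) * volume (closedNbhd (Cset (n + 2)) δ ∩ Icc 0 1) := by
          rw [pow_succ, mul_assoc]

theorem rpow_isBigO_volume_closedNbhd_Cset {m : ℕ} (hm : 0 < m) {β : ℝ} (hβ : 1 / 2 ≤ β) :
    (fun δ : ℝ => δ ^ β) =O[𝓝[>] 0] fun δ => (volume (closedNbhd (Cset m) δ)).toReal := by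
  obtain ⟨n, rfl⟩ := Nat.exists_eq_succ_of_ne_zero hm.ne'
  refine IsBigO.of_bound (4 ^ n) ?_
  filter_upwards [Ioc_mem_nhdsGT one_pos] with δ ⟨hδ0, hδ1⟩
  have hfinite : volume (closedNbhd (Cset (n + 1)) δ) ≠ ⊤ :=
    (volume_closedNbhd_lt_top (Metric.isBounded_Icc 0 1 |>.subset (Cset_subset_Icc _)) δ).ne
  have hsqrt : ENNReal.ofReal √δ ≤ 4 ^ n * volume (closedNbhd (Cset (n + 1)) δ) :=
    (ofReal_sqrt_le_volume_closedNbhd_Cset n hδ1).trans (by gcongr; exact inter_subset_left)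
  rw [Real.norm_of_nonneg (by positivity), Real.norm_of_nonneg ENNReal.toReal_nonneg]
  calc δ ^ β ≤ δ ^ (1 / 2 : ℝ) := Real.rpow_le_rpow_of_exponent_ge hδ0 hδ1 hβ
    _ = √δ := (Real.sqrt_eq_rpow δ).symm
    _ ≤ (4 ^ n * volume (closedNbhd (Cset (n + 1)) δ)).toReal :=
        (ENNReal.ofReal_le_iff_le_toReal (by finiteness)).1 hsqrt
    _ = 4 ^ n * (volume (closedNbhd (Cset (n + 1)) δ)).toReal := by simp

/-- The Minkowski dimension of `C_m` is `1/2`: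
`lim_{δ → 0⁺} log λ(V_δ(C_m)) / log δ = 1 - 1/2 = 1/2`. -/
theorem minkowski_dim_Cm (m : ℕ) (hm : 0 < m) :
    Tendsto (fun δ : ℝ => Real.log (volume (closedNbhd (Cset m) δ)).toReal / Real.log δ)
      (nhdsWithin (0 : ℝ) (Set.Ioi 0)) (nhds (1 / 2 : ℝ)) := by
  refine tendsto_log_div_log_of_isBigO_rpow (fun β hβ => ?_) fun β hβ =>
    rpow_isBigO_volume_closedNbhd_Cset hm hβ.le
  have hcover : HasCoverExponent (1 - β) (Cset m) := hasCoverExponent_Cset (by linarith) m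
  simpa only [sub_sub_cancel] using hcover.volume_closedNbhd_isBigO
end

section
/- For every positive integer m, the Minkowski dimension of F_m equals 1 − 1/2^m; equivalently, lim_{δ→0⁺} log λ(V_δ(F_m)) / log δ = 1/2^m. -/
open MeasureTheory Filter Set

/-- `F = {1/n : n ∈ ℕ, n ≥ 1} ∪ {0}`. -/
def Fset : Set ℝ := {0} ∪ {x : ℝ | ∃ n : ℕ, 0 < n ∧ x = 1 / (n : ℝ)}

/-- `F_m = F + ⋯ + F` (`m`-fold arithmetic sumset). -/
def FsumSet (m : ℕ) : Set ℝ :=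
  {x : ℝ | ∃ a : Fin m → ℝ, (∀ i, a i ∈ Fset) ∧ x = ∑ i, a i}

/-!
Write `V_δ(F_m)` as `m • F + [-δ, δ]` and put `δ = s ^ 2 ^ m`. Greedily subtracting the largest
`1/n ≤ x` from `x > 0` leaves a remainder in `[0, x ^ 2]`, so `m` subtractions leave a remainder in
`[0, x ^ 2 ^ m]`; hence `V_δ(F_m)` contains `[0, s]`. Conversely, at most `1/s` elements of `F`
exceed `s`, so `F_m` is covered by `[0, m s]` and at most `1/s` translates of `F_{m-1}`. Since
`δ = (s ^ 2) ^ 2 ^ (m - 1)`, the set `V_δ(F_{m-1})` has measure `O(s ^ 2)` by induction, and its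
translates contribute `O(s)`. Thus `λ(V_δ(F_m))` is of exact order `s = δ ^ (1 / 2 ^ m)`.
-/

open Asymptotics Topology
open scoped Pointwise

section Pointwise

theorem nsmul_Icc_subset {M : Type*} [AddMonoid M] [Preorder M] [AddLeftMono M]
    [AddRightMono M] (n : ℕ) (a b : M) : n • Icc a b ⊆ Icc (n • a) (n • b) := by
  induction n with
  | zero => simp
  | succ n ih =>
    simp only [succ_nsmul]
    exact (add_subset_add_right ih).trans (Icc_add_Icc_subset ..)

theorem succ_nsmul_subset_union {M : Type*} [AddCommMonoid M] {A B T : Set M}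
    (h : A ⊆ B ∪ T) (m : ℕ) : (m + 1) • A ⊆ (m + 1) • B ∪ (T + m • A) := by
  induction m with
  | zero => simpa using h
  | succ m ih =>
    rw [succ_nsmul' A (m + 1), succ_nsmul' B (m + 1)]
    rintro _ ⟨a, ha, x, hx, rfl⟩
    obtain haB | haT := h ha
    · obtain hxB | ⟨t, ht, y, hy, rfl⟩ := ih hx
      · exact Or.inl (add_mem_add haB hxB)
      · refine Or.inr ⟨t, ht, a + y, ?_, add_left_comm t a y⟩
        exact succ_nsmul' A m ▸ add_mem_add ha hy
    · exact Or.inr (add_mem_add haT hx)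

theorem measure_finset_vadd_le {G α : Type*} [AddGroup G] [AddAction G α] [MeasurableSpace α]
    (μ : Measure α) [VAddInvariantMeasure G α μ] (T : Finset G) (s : Set α) :
    μ ((T : Set G) +ᵥ s) ≤ T.card * μ s := by
  calc μ ((T : Set G) +ᵥ s) = μ (⋃ t ∈ T, t +ᵥ s) := by
        simp only [← iUnion_vadd_set, Finset.mem_coe]
    _ ≤ ∑ t ∈ T, μ (t +ᵥ s) := measure_biUnion_finset_le T _
    _ = T.card * μ s := by simp only [measure_vadd, Finset.sum_const, nsmul_eq_mul]

end Pointwise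

section LogAsymptotics

theorem isBigO_log_norm_sub_log_norm {α E F : Type*} [NormedAddCommGroup E]
    [NormedAddCommGroup F] {l : Filter α} {f : α → E} {g : α → F} (h : f =Θ[l] g) :
    (fun x => Real.log ‖f x‖ - Real.log ‖g x‖) =O[l] (fun _ => (1 : ℝ)) := by
  obtain ⟨C, hC, hfg⟩ := h.isBigO.exists_pos
  obtain ⟨D, hD, hgf⟩ := h.symm.isBigO.exists_pos
  refine IsBigO.of_bound (max |Real.log C| |Real.log D|) ?_
  filter_upwards [hfg.bound, hgf.bound, h.eq_zero_iff] with x hfx hgx hzero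
  obtain hg | hg := eq_or_ne (g x) 0
  · simp [hg, hzero.2 hg]
  have hf : f x ≠ 0 := mt hzero.1 hg
  have hle : Real.log ‖f x‖ ≤ Real.log C + Real.log ‖g x‖ := by
    rw [← Real.log_mul hC.ne' (norm_ne_zero_iff.2 hg)]
    exact Real.log_le_log (norm_pos_iff.2 hf) hfx
  have hge : Real.log ‖g x‖ ≤ Real.log D + Real.log ‖f x‖ := by
    rw [← Real.log_mul hD.ne' (norm_ne_zero_iff.2 hf)]
    exact Real.log_le_log (norm_pos_iff.2 hg) hgx
  rw [norm_one, mul_one, Real.norm_eq_abs, abs_le']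
  constructor
  · linarith [le_abs_self (Real.log C), le_max_left |Real.log C| |Real.log D|]
  · linarith [le_abs_self (Real.log D), le_max_right |Real.log C| |Real.log D|]

theorem tendsto_log_div_log_of_isTheta_rpow {f : ℝ → ℝ} {p : ℝ}
    (h : f =Θ[𝓝[>] 0] fun x => x ^ p) :
    Tendsto (fun x => Real.log (f x) / Real.log x) (𝓝[>] 0) (𝓝 p) := by
  have hlog : Tendsto (norm ∘ Real.log) (𝓝[>] 0) atTop :=
    tendsto_abs_atBot_atTop.comp Real.tendsto_log_nhdsGT_zero
  have hdiff := (isBigO_log_norm_sub_log_norm h).trans_isLittleO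
    (isLittleO_const_left.2 (Or.inr hlog))
  have hlim := hdiff.tendsto_div_nhds_zero.add_const p
  rw [zero_add] at hlim
  refine hlim.congr' ?_
  filter_upwards [Ioo_mem_nhdsGT one_pos] with x hx
  have hx0 : Real.log x ≠ 0 := (Real.log_neg hx.1 hx.2).ne
  simp only [Real.norm_eq_abs, Real.log_abs]
  rw [Real.log_rpow hx.1]
  field_simp
  ring

end LogAsymptotics

section Sumset

theorem closedNbhd_eq_add (Ω : Set ℝ) (δ : ℝ) : closedNbhd Ω δ = Ω + Icc (-δ) δ := by
  ext x
  simp only [closedNbhd, mem_ofPred_eq, abs_le, Set.mem_add]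
  constructor
  · rintro ⟨y, hy, hxy⟩
    exact ⟨y, hy, x - y, hxy, add_sub_cancel y x⟩
  · rintro ⟨y, hy, z, hz, rfl⟩
    exact ⟨y, hy, by rwa [add_sub_cancel_left]⟩

theorem FsumSet_eq_nsmul (m : ℕ) : FsumSet m = m • Fset := by
  have hsum : m • Fset = ∑ _i : Fin m, Fset := by simp
  ext x
  simp only [hsum, mem_fintype_sum, FsumSet, mem_ofPred_eq, exists_prop, eq_comm]

theorem volume_closedNbhd_succ_nsmul_le {A : Set ℝ} {T : Finset ℝ} {s : ℝ}
    (h : A ⊆ Icc 0 s ∪ T) (m : ℕ) (δ : ℝ) :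
    volume (closedNbhd ((m + 1) • A) δ) ≤
      ENNReal.ofReal ((m + 1) * s + 2 * δ) + T.card * volume (closedNbhd (m • A) δ) := by
  have hcover : closedNbhd ((m + 1) • A) δ ⊆
      Icc (-δ) ((m + 1) * s + δ) ∪ (T + closedNbhd (m • A) δ) := by
    simp only [closedNbhd_eq_add]
    calc (m + 1) • A + Icc (-δ) δ
        ⊆ ((m + 1) • Icc 0 s ∪ (T + m • A)) + Icc (-δ) δ :=
          add_subset_add_right (succ_nsmul_subset_union h m)
      _ = ((m + 1) • Icc 0 s + Icc (-δ) δ) ∪ (T + (m • A + Icc (-δ) δ)) := by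
          rw [union_add, add_assoc]
      _ ⊆ Icc (-δ) ((m + 1) * s + δ) ∪ (T + (m • A + Icc (-δ) δ)) := by
          refine union_subset_union_left _ ?_
          refine (add_subset_add_right (nsmul_Icc_subset _ _ _)).trans ?_
          simpa using Icc_add_Icc_subset ((m + 1) • (0 : ℝ)) ((m + 1) • s) (-δ) δ
  calc volume (closedNbhd ((m + 1) • A) δ)
      ≤ volume (Icc (-δ) ((m + 1) * s + δ)) + volume ((T : Set ℝ) + closedNbhd (m • A) δ) :=
        (measure_mono hcover).trans (measure_union_le _ _)
    _ ≤ ENNReal.ofReal ((m + 1) * s + 2 * δ) + T.card * volume (closedNbhd (m • A) δ) := by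
        gcongr
        · rw [Real.volume_Icc]
          exact (congrArg ENNReal.ofReal (by ring)).le
        · exact measure_finset_vadd_le volume T _

end Sumset

section LowerBound

theorem exists_mem_Fset_sub_mem_Icc_sq {x : ℝ} (hx : 0 ≤ x) :
    ∃ b ∈ Fset, x - b ∈ Icc 0 (x ^ 2) := by
  obtain rfl | hx := hx.eq_or_lt
  · exact ⟨0, Or.inl rfl, by simp⟩
  obtain ⟨n, hle, hlt⟩ : ∃ n : ℕ, x⁻¹ ≤ n ∧ n < x⁻¹ + 1 :=
    ⟨⌈x⁻¹⌉₊, Nat.le_ceil _, Nat.ceil_lt_add_one (by positivity)⟩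
  have hn : (0 : ℝ) < n := (inv_pos.2 hx).trans_le hle
  have hnx : 1 ≤ n * x := (inv_le_iff_one_le_mul₀ hx).1 hle
  have hnx' : n * x ≤ 1 + x := by
    calc n * x ≤ (x⁻¹ + 1) * x := by gcongr
      _ = 1 + x := by field_simp
  refine ⟨1 / n, Or.inr ⟨n, Nat.cast_pos.1 hn, rfl⟩, ?_⟩
  have hrem : x - 1 / n = (n * x - 1) / n := by field_simp
  rw [hrem, mem_Icc, div_le_iff₀ hn]
  exact ⟨div_nonneg (sub_nonneg.2 hnx) hn.le, by nlinarith⟩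

theorem exists_mem_nsmul_Fset_sub_mem_Icc_pow (m : ℕ) {x : ℝ} (hx : 0 ≤ x) :
    ∃ y ∈ m • Fset, x - y ∈ Icc 0 (x ^ 2 ^ m) := by
  induction m generalizing x with
  | zero => exact ⟨0, by simp, by simpa using hx⟩
  | succ m ih =>
    obtain ⟨b, hb, hxb, hxb_le⟩ := exists_mem_Fset_sub_mem_Icc_sq hx
    obtain ⟨y, hy, hxby, hxby_le⟩ := ih hxb
    refine ⟨b + y, succ_nsmul' Fset m ▸ add_mem_add hb hy, ?_⟩
    rw [← sub_sub]
    refine ⟨hxby, hxby_le.trans ?_⟩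
    calc (x - b) ^ 2 ^ m ≤ (x ^ 2) ^ 2 ^ m := by gcongr
      _ = x ^ 2 ^ (m + 1) := by rw [← pow_mul, ← pow_succ']

theorem Icc_subset_closedNbhd_nsmul_Fset (m : ℕ) (s : ℝ) :
    Icc 0 s ⊆ closedNbhd (m • Fset) (s ^ 2 ^ m) := by
  rintro x ⟨hx, hxs⟩
  obtain ⟨y, hy, hxy, hxy_le⟩ := exists_mem_nsmul_Fset_sub_mem_Icc_pow m hx
  refine ⟨y, hy, ?_⟩
  rw [abs_of_nonneg hxy]
  exact hxy_le.trans (by gcongr)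

end LowerBound

section UpperBound

theorem exists_finset_Fset_subset_Icc_union {s : ℝ} (hs : 0 < s) :
    ∃ T : Finset ℝ, T.card ≤ s⁻¹ ∧ Fset ⊆ Icc 0 s ∪ T := by
  refine ⟨(Finset.Icc 1 ⌊s⁻¹⌋₊).image fun n : ℕ => 1 / (n : ℝ), ?_, ?_⟩
  · calc (((Finset.Icc 1 ⌊s⁻¹⌋₊).image fun n : ℕ => 1 / (n : ℝ)).card : ℝ)
        ≤ ⌊s⁻¹⌋₊ := by
          exact_mod_cast Finset.card_image_le.trans_eq (by simp)
      _ ≤ s⁻¹ := Nat.floor_le (by positivity)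
  · rintro x (rfl | ⟨n, hn, rfl⟩)
    · exact Or.inl ⟨le_rfl, hs.le⟩
    obtain hns | hns := le_or_gt (1 / (n : ℝ)) s
    · exact Or.inl ⟨by positivity, hns⟩
    · have hfloor : n ≤ ⌊s⁻¹⌋₊ := by
        refine Nat.le_floor ?_
        rw [← one_div]
        exact ((lt_one_div hs (Nat.cast_pos.2 hn)).1 hns).le
      exact Or.inr (Finset.mem_image_of_mem _ (Finset.mem_Icc.2 ⟨hn, hfloor⟩))

theorem volume_closedNbhd_nsmul_Fset_le (m : ℕ) {s : ℝ} (hs : 0 < s) (hs1 : s ≤ 1) :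
    volume (closedNbhd (m • Fset) (s ^ 2 ^ m)) ≤ ENNReal.ofReal ((m + 1) * (m + 2) * s) := by
  induction m generalizing s with
  | zero =>
    rw [closedNbhd_eq_add, zero_nsmul, zero_add, Real.volume_Icc]
    refine ENNReal.ofReal_le_ofReal (le_of_eq ?_)
    push_cast
    ring
  | succ m ih =>
    obtain ⟨T, hT, hcover⟩ := exists_finset_Fset_subset_Icc_union hs
    have hδ : s ^ 2 ^ (m + 1) = (s ^ 2) ^ 2 ^ m := by rw [← pow_mul, ← pow_succ']
    have hδs : s ^ 2 ^ (m + 1) ≤ s := pow_le_of_le_one hs.le hs1 (by positivity)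
    have htranslates : T.card * volume (closedNbhd (m • Fset) (s ^ 2 ^ (m + 1))) ≤
        ENNReal.ofReal ((m + 1) * (m + 2) * s) := by
      calc T.card * volume (closedNbhd (m • Fset) (s ^ 2 ^ (m + 1)))
          ≤ ENNReal.ofReal s⁻¹ * ENNReal.ofReal ((m + 1) * (m + 2) * s ^ 2) := by
            rw [hδ, ← ENNReal.ofReal_natCast]
            gcongr
            exact ih (by positivity) (pow_le_one₀ hs.le hs1)
        _ = ENNReal.ofReal ((m + 1) * (m + 2) * s) := by
            rw [← ENNReal.ofReal_mul (by positivity)]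
            congr 1
            field_simp
    calc volume (closedNbhd ((m + 1) • Fset) (s ^ 2 ^ (m + 1)))
        ≤ ENNReal.ofReal ((m + 1) * s + 2 * s ^ 2 ^ (m + 1)) +
            T.card * volume (closedNbhd (m • Fset) (s ^ 2 ^ (m + 1))) :=
          volume_closedNbhd_succ_nsmul_le hcover m _
      _ ≤ ENNReal.ofReal ((m + 1) * s + 2 * s) + ENNReal.ofReal ((m + 1) * (m + 2) * s) := by
          gcongr
      _ = ENNReal.ofReal ((m + 1) * s + 2 * s + (m + 1) * (m + 2) * s) :=
          (ENNReal.ofReal_add (by positivity) (by positivity)).symm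
      _ ≤ ENNReal.ofReal (((m + 1 : ℕ) + 1) * ((m + 1 : ℕ) + 2) * s) := by
          refine ENNReal.ofReal_le_ofReal ?_
          push_cast
          have hms : 0 ≤ (m + 1) * s := by positivity
          linarith

end UpperBound

theorem isTheta_volume_closedNbhd_nsmul_Fset (m : ℕ) :
    (fun δ => volume.real (closedNbhd (m • Fset) δ)) =Θ[𝓝[>] 0] fun δ => δ ^ ((1 : ℝ) / 2 ^ m) := by
  have hbounds : ∀ᶠ δ : ℝ in 𝓝[>] 0, 0 ≤ δ ^ ((1 : ℝ) / 2 ^ m) ∧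
      δ ^ ((1 : ℝ) / 2 ^ m) ≤ volume.real (closedNbhd (m • Fset) δ) ∧
      volume.real (closedNbhd (m • Fset) δ) ≤ (m + 1) * (m + 2) * δ ^ ((1 : ℝ) / 2 ^ m) := by
    filter_upwards [Ioo_mem_nhdsGT one_pos] with δ ⟨hδ0, hδ1⟩
    set s := δ ^ ((1 : ℝ) / 2 ^ m) with hs
    have hs0 : 0 < s := Real.rpow_pos_of_pos hδ0 _
    have hs1 : s ≤ 1 := Real.rpow_le_one hδ0.le hδ1.le (by positivity)
    have hsδ : s ^ 2 ^ m = δ := by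
      rw [hs, ← Real.rpow_natCast, ← Real.rpow_mul hδ0.le]
      simp
    have hupper := volume_closedNbhd_nsmul_Fset_le m hs0 hs1
    have hsub := Icc_subset_closedNbhd_nsmul_Fset m s
    rw [hsδ] at hupper hsub
    refine ⟨hs0.le, ?_, ENNReal.toReal_le_of_le_ofReal (by positivity) hupper⟩
    calc s = volume.real (Icc 0 s) := by simp [hs0.le]
      _ ≤ volume.real (closedNbhd (m • Fset) δ) :=
        measureReal_mono hsub (ne_top_of_le_ne_top ENNReal.ofReal_ne_top hupper)
  constructor
  · refine IsBigO.of_bound ((m + 1) * (m + 2)) (hbounds.mono fun δ hδ => ?_)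
    rw [Real.norm_of_nonneg measureReal_nonneg, Real.norm_of_nonneg hδ.1]
    exact hδ.2.2
  · refine IsBigO.of_norm_eventuallyLE (hbounds.mono fun δ hδ => ?_)
    dsimp only
    rw [Real.norm_of_nonneg hδ.1]
    exact hδ.2.1

/-- The Minkowski dimension of `F_m` is `1 - 1/2^m`:
`lim_{δ → 0⁺} log λ(V_δ(F_m)) / log δ = 1/2^m`. -/
theorem minkowski_dim_Fm (m : ℕ) (hm : 0 < m) :
    Tendsto (fun δ : ℝ => Real.log (volume (closedNbhd (FsumSet m) δ)).toReal / Real.log δ)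
      (nhdsWithin (0 : ℝ) (Set.Ioi 0)) (nhds ((1 : ℝ) / 2 ^ m)) := by
  rw [FsumSet_eq_nsmul]
  exact tendsto_log_div_log_of_isTheta_rpow (isTheta_volume_closedNbhd_nsmul_Fset m)
end

section
/- Let m, n be positive integers and let a ∈ S_k with 0 ≤ k < m satisfy π(a) ≤ n^m, and set θ_{m,n}(a) = n^m / π(a). Then for every integer ℓ > θ_{m,n}(a) and every word b ∈ T_{m, aℓ}, where aℓ denotes a with the letter ℓ appended, one has |g(b) − g(a)| ≤ θ_{m,n}(a) / n^{2m}. -/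
open Set

/-!
Each partial quotient `x` acts on the tail of a continued fraction by `t ↦ 1 / (x + t)`, which on
nonnegative reals has Lipschitz constant `1 / x²`. Hence the prefix `a` acts with Lipschitz
constant `1 / π(a)²`, and replacing the empty tail by one that starts with `ℓ` moves the value by
at most `1 / (ℓ π(a)²)`. If `ℓ ≥ θ = N / π(a)`, this is at most `1 / (θ π(a)²) = θ / N²`; the
theorem takes `N = n ^ m`.
-/

lemma abs_one_div_add_sub_one_div_add_le {K : Type*} [Field K] [LinearOrder K]
    [IsStrictOrderedRing K] {x u v : K} (hx : 0 < x) (hu : 0 ≤ u) (hv : 0 ≤ v) :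
    |1 / (x + u) - 1 / (x + v)| ≤ |u - v| / x ^ 2 := by
  have hxu : 0 < x + u := by positivity
  have hxv : 0 < x + v := by positivity
  calc |1 / (x + u) - 1 / (x + v)|
      = |u - v| / ((x + u) * (x + v)) := by
        rw [div_sub_div _ _ hxu.ne' hxv.ne', abs_div, abs_of_pos (mul_pos hxu hxv), abs_sub_comm u]
        congr 2
        ring
    _ ≤ |u - v| / (x * x) := by
        gcongr
        · exact le_add_of_nonneg_right hu
        · exact le_add_of_nonneg_right hv
    _ = |u - v| / x ^ 2 := by rw [sq]

lemma cfVal_nonneg (a : List ℕ) : 0 ≤ cfVal a := by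
  induction a with
  | nil => exact le_rfl
  | cons x s ih => exact one_div_nonneg.2 (add_nonneg x.cast_nonneg ih)

lemma cfVal_cons_le_one_div {x : ℕ} (hx : 0 < x) (s : List ℕ) : cfVal (x :: s) ≤ 1 / (x : ℝ) :=
  one_div_le_one_div_of_le (Nat.cast_pos.2 hx) (le_add_of_nonneg_right (cfVal_nonneg s))

lemma abs_cfVal_append_sub_cfVal_le {a : List ℕ} (ha : ∀ x ∈ a, 0 < x) (t : List ℕ) :
    |cfVal (a ++ t) - cfVal a| ≤ cfVal t / (a.prod : ℝ) ^ 2 := by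
  induction a with
  | nil => simp [cfVal, abs_of_nonneg (cfVal_nonneg t)]
  | cons x s ih =>
    obtain ⟨hx, hs⟩ := List.forall_mem_cons.1 ha
    calc |cfVal (x :: (s ++ t)) - cfVal (x :: s)|
        ≤ |cfVal (s ++ t) - cfVal s| / (x : ℝ) ^ 2 :=
          abs_one_div_add_sub_one_div_add_le (Nat.cast_pos.2 hx) (cfVal_nonneg _) (cfVal_nonneg _)
      _ ≤ cfVal t / (s.prod : ℝ) ^ 2 / (x : ℝ) ^ 2 := by
          gcongr
          exact ih hs
      _ = cfVal t / ((x :: s).prod : ℝ) ^ 2 := by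
          rw [div_div, ← mul_pow, List.prod_cons, Nat.cast_mul, mul_comm (x : ℝ)]

theorem cf_good_word_gap_general {N : ℝ} (hN : 0 < N) {a : List ℕ} (ha : ∀ x ∈ a, 0 < x)
    {ℓ : ℕ} (hℓ : N / (a.prod : ℝ) ≤ ℓ) {b : List ℕ} (hpre : a ++ [ℓ] <+: b) :
    |cfVal b - cfVal a| ≤ N / (a.prod : ℝ) / N ^ 2 := by
  obtain ⟨s, rfl⟩ := hpre
  have hprod : 0 < (a.prod : ℝ) := Nat.cast_pos.2 (List.prod_pos ha)
  have hθ : 0 < N / (a.prod : ℝ) := div_pos hN hprod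
  calc |cfVal (a ++ [ℓ] ++ s) - cfVal a|
      = |cfVal (a ++ ℓ :: s) - cfVal a| := by rw [List.append_assoc, List.singleton_append]
    _ ≤ cfVal (ℓ :: s) / (a.prod : ℝ) ^ 2 := abs_cfVal_append_sub_cfVal_le ha _
    _ ≤ 1 / (ℓ : ℝ) / (a.prod : ℝ) ^ 2 := by
        gcongr
        exact cfVal_cons_le_one_div (Nat.cast_pos.1 (hθ.trans_le hℓ)) s
    _ ≤ 1 / (N / (a.prod : ℝ)) / (a.prod : ℝ) ^ 2 := by gcongr
    _ = N / (a.prod : ℝ) / N ^ 2 := by field_simp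

/-- Let `m, n ≥ 1`, let `a ∈ S_k` with `k < m` satisfy `π(a) ≤ n^m`, and set
`θ = n^m / π(a)`. Then for every integer `ℓ > θ` and every `b ∈ T_{m, aℓ}`
(i.e. `b ∈ S_m` having `a ++ [ℓ]` as a prefix), `|g(b) - g(a)| ≤ θ / n^(2m)`. -/
theorem cf_good_word_gap (m n : ℕ) (hm : 0 < m) (hn : 0 < n) (k : ℕ) (hk : k < m)
    (a : List ℕ) (hlen : a.length = k) (haS : isCFWord a) (hπ : a.prod ≤ n ^ m)
    (ℓ : ℕ) (hℓ : ((n : ℝ) ^ m / (a.prod : ℝ)) < (ℓ : ℝ))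
    (b : List ℕ) (hblen : b.length = m) (hbS : isCFWord b) (hpre : (a ++ [ℓ]) <+: b) :
    |cfVal b - cfVal a| ≤ ((n : ℝ) ^ m / (a.prod : ℝ)) / (n : ℝ) ^ (2 * m) := by
  simpa only [mul_comm 2 m, pow_mul] using
    cf_good_word_gap_general (by positivity : (0 : ℝ) < (n : ℝ) ^ m) haS.1 hℓ.le hpre
end
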